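/- The strand doubling maps on symmetric groups satisfy the coherence relation ∂ⁱₙ(σ ∘ τ) = ∂^{τ(i)}ₙ(σ) ∘ ∂ⁱₙ(τ) for all n ≥ 1, all σ, τ ∈ 𝔖ₙ and all i ∈ {1,…,n}. -/

import Mathlib

/-!
Every strand endpoint in `Fin (n + 1)` is either the lower copy `a.castSucc` of a letter `a ≤ i`
or the upper copy `a.succ` of a letter `a ≥ i`, and `strandDoubling i σ` carries it to a copy of
`σ a`. Hence both sides of the relation send it to a copy of `σ (τ a)`, and only the choice between
`castSucc` and `succ` has to be compared. For `a = i` lower goes to lower and upper to upper on both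
sides. For `a ≠ i` injectivity of `σ` and `τ` makes the strict and the weak comparison with the
image of `i` equivalent, so on both sides the choice depends only on whether
`σ (τ a) < σ (τ i)`. The two cases are evaluated by `strandDoubling_castSucc` and
`strandDoubling_succ`.
-/

/-- The `i`-th strand doubling map `∂ⁱₙ : 𝔖ₙ → 𝔖ₙ₊₁` (here `Fin n` plays the role of
`{1, …, n}`, so indices are shifted by one).  It duplicates the letter `i` at the
source and the letter `j = σ i` at the target: writing `cᵢ : Fin (n+1) → Fin n` for
the map collapsing the two copies of `i` (`cᵢ k = k` for `k ≤ i` and `cᵢ k = k - 1`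
for `k > i`), the permutation `∂ⁱₙ σ` sends `i ↦ j`, `i + 1 ↦ j + 1`, and
`k ↦ σ (cᵢ k)` resp. `k ↦ σ (cᵢ k) + 1` according to whether `σ (cᵢ k) < j` or
`σ (cᵢ k) > j`, for `k ∉ {i, i+1}`. -/
def strandDoubling {n : ℕ} (i : Fin n) (σ : Equiv.Perm (Fin n)) :
    Fin (n + 1) → Fin (n + 1) := fun k =>
  if h : (k : ℕ) ≤ (i : ℕ) then
    -- here `cᵢ k = k`; this branch also covers `k = i`, where the value is `j`
    let v := σ ⟨(k : ℕ), lt_of_le_of_lt h i.isLt⟩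
    if (v : ℕ) ≤ ((σ i : Fin n) : ℕ) then v.castSucc else v.succ
  else
    -- here `cᵢ k = k - 1`; this branch also covers `k = i + 1`, where the value is `j + 1`
    let v := σ ⟨(k : ℕ) - 1, by have hk := k.isLt; have hi := i.isLt; omega⟩
    if (v : ℕ) < ((σ i : Fin n) : ℕ) then v.castSucc else v.succ

theorem strandDoubling_castSucc {n : ℕ} {i a : Fin n} (σ : Equiv.Perm (Fin n)) (h : a ≤ i) :
    strandDoubling i σ a.castSucc = if σ a ≤ σ i then (σ a).castSucc else (σ a).succ := by
  have h' : (a : ℕ) ≤ i := h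
  simp [strandDoubling, h']

theorem strandDoubling_succ {n : ℕ} {i a : Fin n} (σ : Equiv.Perm (Fin n)) (h : i ≤ a) :
    strandDoubling i σ a.succ = if σ a < σ i then (σ a).castSucc else (σ a).succ := by
  have h' : ¬ (a : ℕ) + 1 ≤ i := not_le.2 (Nat.lt_succ_of_le h)
  simp [strandDoubling, h']

theorem Fin.exists_castSucc_or_succ {n : ℕ} (i : Fin n) (k : Fin (n + 1)) :
    (∃ a ≤ i, k = a.castSucc) ∨ ∃ a, i ≤ a ∧ k = a.succ := by
  rcases le_or_gt k i.castSucc with h | h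
  · have h' : (k : ℕ) ≤ i := h
    exact Or.inl ⟨⟨k, by omega⟩, h', rfl⟩
  · have h' : (i : ℕ) < k := h
    refine Or.inr ⟨⟨k - 1, by omega⟩, Nat.le_sub_one_of_lt h', ?_⟩
    ext
    simp only [Fin.val_succ]
    omega

/-- The strand doubling maps on symmetric groups satisfy the coherence relation
`∂ⁱₙ (σ ∘ τ) = ∂^{τ(i)}ₙ (σ) ∘ ∂ⁱₙ (τ)` for all `σ, τ ∈ 𝔖ₙ` and all `i`
(composition `σ ∘ τ` means `τ` applied first). -/
theorem strandDoubling_coherence {n : ℕ} (σ τ : Equiv.Perm (Fin n)) (i : Fin n) :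
    strandDoubling i (σ * τ) = strandDoubling (τ i) σ ∘ strandDoubling i τ := by
  funext k
  rw [Function.comp_apply]
  rcases Fin.exists_castSucc_or_succ i k with ⟨a, ha, rfl⟩ | ⟨a, ha, rfl⟩
  · rw [strandDoubling_castSucc _ ha, strandDoubling_castSucc _ ha]
    by_cases h : τ a ≤ τ i
    · rw [if_pos h, strandDoubling_castSucc _ h]
      rfl
    · -- `τ` moves the lower copy of `a` to an upper copy, which forces `a ≠ i`.
      have hne : σ (τ a) ≠ σ (τ i) := fun e => h (σ.injective e).le
      rw [if_neg h, strandDoubling_succ _ (not_le.1 h).le]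
      exact if_congr hne.le_iff_lt rfl rfl
  · rw [strandDoubling_succ _ ha, strandDoubling_succ _ ha]
    by_cases h : τ a < τ i
    · -- `τ` moves the upper copy of `a` to a lower copy, which forces `a ≠ i`.
      have hne : σ (τ a) ≠ σ (τ i) := fun e => h.ne (σ.injective e)
      rw [if_pos h, strandDoubling_castSucc _ h.le]
      exact if_congr hne.le_iff_lt.symm rfl rfl
    · rw [if_neg h, strandDoubling_succ _ (not_lt.1 h)]
      rfl
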